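/- arXiv:2306.05154 — 6 statements merged into one kernel-verified Lean document; each statement's English description precedes it below -/
import Mathlib

section
/- Let f be a signomial on the positive orthant ℝⁿ_{>0} and let v ∈ ℝⁿ. If the restriction of f to the face N(f)_v of its Newton polytope takes a negative value at some point x ∈ ℝⁿ_{>0}, i.e. f_{|N(f)_v}(x) < 0, then there exists T ∈ ℝ_{>0} such that for all t > T one has f(t^v ∗ x) < 0, where t^v ∗ x = (t^{v₁}x₁, …, t^{v_n}x_n). -/
/-- A signomial on the positive orthant `ℝⁿ_{>0}`: a function
`x ↦ ∑_{μ ∈ supp} coeff μ * x ^ μ` with finite support and nonzero coefficients. -/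
structure Signomial (n : ℕ) where
  supp : Finset (Fin n → ℝ)
  coeff : (Fin n → ℝ) → ℝ
  coeff_ne_zero : ∀ μ ∈ supp, coeff μ ≠ 0
  coeff_eq_zero : ∀ μ ∉ supp, coeff μ = 0

namespace Signomial

variable {n : ℕ}

/-- The monomial `x^μ = ∏ i, x i ^ μ i` (real exponents). -/
noncomputable def mono (x μ : Fin n → ℝ) : ℝ := ∏ i, x i ^ μ i

/-- Evaluation of a signomial. -/
noncomputable def eval (f : Signomial n) (x : Fin n → ℝ) : ℝ :=
  ∑ μ ∈ f.supp, f.coeff μ * mono x μ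

open Classical in
/-- Evaluation of the restriction `f_{|S}` of `f` to a set `S ⊆ ℝⁿ`. -/
noncomputable def evalOn (f : Signomial n) (S : Set (Fin n → ℝ)) (x : Fin n → ℝ) : ℝ :=
  ∑ μ ∈ f.supp, if μ ∈ S then f.coeff μ * mono x μ else 0

/-- The Newton polytope `N(f) = conv(σ(f))`. -/
def newton (f : Signomial n) : Set (Fin n → ℝ) :=
  convexHull ℝ (f.supp : Set (Fin n → ℝ))

/-- Euclidean scalar product on `Fin n → ℝ`. -/
noncomputable def dot (v μ : Fin n → ℝ) : ℝ := ∑ i, v i * μ i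

/-- The face `N(f)_v` of the Newton polytope cut out by `v`. -/
def faceAt (f : Signomial n) (v : Fin n → ℝ) : Set (Fin n → ℝ) :=
  {μ ∈ f.newton | ∀ ν ∈ f.newton, dot v ν ≤ dot v μ}

/-- `F` is a (nonempty, exposed) face of the Newton polytope of `f`. -/
def IsFace (f : Signomial n) (F : Set (Fin n → ℝ)) : Prop :=
  F.Nonempty ∧ ∃ v, F = f.faceAt v

/-- The (outer) normal cone of a face `F` of `N(f)`. -/
def normalCone (f : Signomial n) (F : Set (Fin n → ℝ)) : Set (Fin n → ℝ) :=
  {v | F ⊆ f.faceAt v}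

/-- The negative normal cone `N_f^- = {v | N(f)_v ∩ σ₋(f) ≠ ∅}`. -/
def negCone (f : Signomial n) : Set (Fin n → ℝ) :=
  {v | ∃ μ ∈ f.supp, f.coeff μ < 0 ∧ μ ∈ f.faceAt v}

/-- The positive orthant `ℝⁿ_{>0}`. -/
def posOrth (n : ℕ) : Set (Fin n → ℝ) := {x | ∀ i, 0 < x i}

/-- `S(f) = f⁻¹(ℝ_{<0})` (inside the positive orthant). -/
def negSet₁ (f : Signomial n) : Set (Fin n → ℝ) :=
  {x ∈ posOrth n | f.eval x < 0}

/-- `S(f₁, …, f_k) = ⋂ᵢ fᵢ⁻¹(ℝ_{<0})` (inside the positive orthant). -/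
def negSet {k : ℕ} (f : Fin k → Signomial n) : Set (Fin n → ℝ) :=
  {x ∈ posOrth n | ∀ i, (f i).eval x < 0}

/-- The actual negative normal cone `Σ(f)` of a single signomial. -/
def actualNegCone₁ (f : Signomial n) : Set (Fin n → ℝ) :=
  {v | ∃ x ∈ posOrth n, f.evalOn (f.faceAt v) x < 0}

/-- The actual negative normal cone `Σ(f₁, …, f_k)`. -/
def actualNegCone {k : ℕ} (f : Fin k → Signomial n) : Set (Fin n → ℝ) :=
  {v | ∃ x ∈ posOrth n, ∀ i, (f i).evalOn ((f i).faceAt v) x < 0}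

/-- The real tropicalization (logarithmic limit set) of `S ⊆ ℝⁿ_{>0}`:
`w ∈ Trop(S)` iff there are sequences `x(m) ∈ S`, `t(m) ∈ (1,∞)` with `t(m) → ∞` and
`Log_{t(m)}(x(m)) → w`. -/
def trop (S : Set (Fin n → ℝ)) : Set (Fin n → ℝ) :=
  {w | ∃ (x : ℕ → Fin n → ℝ) (t : ℕ → ℝ),
    (∀ m, x m ∈ S) ∧ (∀ m, 1 < t m) ∧
    Filter.Tendsto t Filter.atTop Filter.atTop ∧
    Filter.Tendsto (fun m i => Real.log (x m i) / Real.log (t m))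
      Filter.atTop (nhds w)}

open Classical in
/-- The support of the restriction `f_{|F}`, i.e. `σ(f) ∩ F`. -/
noncomputable def restSupp (f : Signomial n) (F : Set (Fin n → ℝ)) : Finset (Fin n → ℝ) :=
  f.supp.filter (fun μ => μ ∈ F)

/-- Evaluation of the signomial with coefficient vector `c ∈ ℝ^A`. -/
noncomputable def evalVec (A : Finset (Fin n → ℝ)) (c : A → ℝ) (x : Fin n → ℝ) : ℝ :=
  ∑ μ : A, c μ * mono x (μ : Fin n → ℝ)

/-- The nonnegativity cone `P⁺_A ⊆ ℝ^A`. -/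
def nonnegConeSet (A : Finset (Fin n → ℝ)) : Set (A → ℝ) :=
  {c | ∀ x ∈ posOrth n, 0 ≤ evalVec A c x}

/-- The coefficient vector of `f` viewed in `ℝ^A`. -/
def coeffVec (f : Signomial n) (A : Finset (Fin n → ℝ)) : A → ℝ :=
  fun μ => f.coeff μ

/-- The non-boundary condition (NB): for every face `F` of `N(f)`, if `f_{|F}` is
nonnegative on the positive orthant then it lies in the interior of the nonnegativity
cone `P⁺_{σ(f) ∩ F}`. -/
def NBcond (f : Signomial n) : Prop :=
  ∀ F : Set (Fin n → ℝ), f.IsFace F →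
    coeffVec f (f.restSupp F) ∈ nonnegConeSet (f.restSupp F) →
    coeffVec f (f.restSupp F) ∈ interior (nonnegConeSet (f.restSupp F))

end Signomial

/-! Replacing `x` by `t^v ∗ x` multiplies each monomial `x^μ` by `t^(v·μ)`. On the support, `v·μ`
is largest exactly on the face `N(f)_v`, where it has a constant value `m`, so
`t^(-m) f(t^v ∗ x) → f_{|N(f)_v}(x)` as `t → ∞`; if the limit is negative, then so is
`f(t^v ∗ x)` for all large `t`. -/

open Filter Topology

theorem tendsto_sum_rpow_sub_mul_atTop {ι : Type*} {s : Finset ι} {d : ι → ℝ} {m : ℝ}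
    (hd : ∀ i ∈ s, d i ≤ m) (a : ι → ℝ) :
    Tendsto (fun t : ℝ => ∑ i ∈ s, t ^ (d i - m) * a i) atTop
      (𝓝 (∑ i ∈ s, if d i = m then a i else 0)) := by
  refine tendsto_finsetSum s fun i hi => ?_
  split_ifs with heq
  · simp [heq]
  · have hlt : d i < m := lt_of_le_of_ne (hd i hi) heq
    simpa using (tendsto_rpow_neg_atTop (sub_pos.2 hlt)).mul_const (a i)

namespace Signomial

variable {n : ℕ} {t : ℝ} {x : Fin n → ℝ}

theorem mono_rpow_mul (ht : 0 < t) (hx : ∀ i, 0 ≤ x i) (v μ : Fin n → ℝ) :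
    mono (fun i => t ^ v i * x i) μ = t ^ dot v μ * mono x μ := by
  calc mono (fun i => t ^ v i * x i) μ
      = ∏ i, t ^ (v i * μ i) * x i ^ μ i := Finset.prod_congr rfl fun i _ => by
        rw [Real.mul_rpow (Real.rpow_nonneg ht.le _) (hx i), Real.rpow_mul ht.le]
    _ = t ^ dot v μ * mono x μ := by
        rw [Finset.prod_mul_distrib, ← Real.rpow_sum_of_pos ht, dot, mono]

theorem rpow_neg_mul_eval_rpow_mul (f : Signomial n) (ht : 0 < t) (hx : ∀ i, 0 ≤ x i)
    (v : Fin n → ℝ) (m : ℝ) :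
    t ^ (-m) * f.eval (fun i => t ^ v i * x i) =
      ∑ μ ∈ f.supp, t ^ (dot v μ - m) * (f.coeff μ * mono x μ) := by
  rw [eval, Finset.mul_sum]
  refine Finset.sum_congr rfl fun μ _ => ?_
  rw [mono_rpow_mul ht hx, sub_eq_neg_add, Real.rpow_add ht]
  ring

@[simp]
theorem evalOn_empty (f : Signomial n) (x : Fin n → ℝ) : f.evalOn ∅ x = 0 := by
  simp [evalOn]

theorem supp_subset_newton (f : Signomial n) : (f.supp : Set (Fin n → ℝ)) ⊆ f.newton :=
  subset_convexHull ℝ _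

theorem mem_faceAt_iff_dot_eq {f : Signomial n} {v μ ν : Fin n → ℝ} (hν : ν ∈ f.faceAt v)
    (hμ : μ ∈ f.newton) : μ ∈ f.faceAt v ↔ dot v μ = dot v ν :=
  ⟨fun hμF => (hν.2 μ hμ).antisymm (hμF.2 ν hν.1),
    fun heq => ⟨hμ, fun ξ hξ => (hν.2 ξ hξ).trans_eq heq.symm⟩⟩

theorem evalOn_faceAt {f : Signomial n} {v ν : Fin n → ℝ} (hν : ν ∈ f.faceAt v)
    (x : Fin n → ℝ) :
    f.evalOn (f.faceAt v) x =
      ∑ μ ∈ f.supp, if dot v μ = dot v ν then f.coeff μ * mono x μ else 0 := by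
  refine Finset.sum_congr rfl fun μ hμ => ?_
  simp only [mem_faceAt_iff_dot_eq hν (f.supp_subset_newton hμ)]

theorem tendsto_rpow_neg_mul_eval_atTop {f : Signomial n} {v ν : Fin n → ℝ}
    (hν : ν ∈ f.faceAt v) (hx : ∀ i, 0 ≤ x i) :
    Tendsto (fun t : ℝ => t ^ (-dot v ν) * f.eval (fun i => t ^ v i * x i)) atTop
      (𝓝 (f.evalOn (f.faceAt v) x)) := by
  have hmax : ∀ μ ∈ f.supp, dot v μ ≤ dot v ν := fun μ hμ => hν.2 μ (f.supp_subset_newton hμ)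
  rw [evalOn_faceAt hν]
  refine (tendsto_sum_rpow_sub_mul_atTop hmax _).congr' ?_
  filter_upwards [eventually_gt_atTop 0] with t ht
  exact (f.rpow_neg_mul_eval_rpow_mul ht hx v _).symm

end Signomial

open Signomial in
/-- If `f_{|N(f)_v}(x) < 0` for some `x ∈ ℝⁿ_{>0}`, then there is `T > 0`
such that `f(t^v ∗ x) < 0` for all `t > T`. -/
theorem pushing_to_face {n : ℕ} (f : Signomial n) (v x : Fin n → ℝ)
    (hx : x ∈ posOrth n) (h : f.evalOn (f.faceAt v) x < 0) :
    ∃ T : ℝ, 0 < T ∧ ∀ t : ℝ, T < t → f.eval (fun i => t ^ (v i) * x i) < 0 := by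
  obtain ⟨ν, hν⟩ : (f.faceAt v).Nonempty :=
    Set.nonempty_iff_ne_empty.2 fun hempty => by simp [hempty] at h
  have hlim := tendsto_rpow_neg_mul_eval_atTop hν fun i => (hx i).le
  have hneg : ∀ᶠ t : ℝ in atTop, f.eval (fun i => t ^ v i * x i) < 0 := by
    filter_upwards [hlim.eventually_lt_const h, eventually_gt_atTop 0] with t hscaled ht
    exact neg_of_mul_neg_right hscaled (Real.rpow_nonneg ht.le _)
  exact (atTop_basis_Ioi' 0).eventually_iff.1 hneg
end

section
/- Let f₁, …, f_k be signomials on ℝⁿ_{>0}, let C be a cone in the common refinement ⋀_{i=1}^{k} N_{f_i} of their normal fans, and let v be a point of the relative interior of C. If v ∈ Σ(f₁, …, f_k), then C ⊆ Σ(f₁, …, f_k). -/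
/-!
Moving a point `x` along `t ↦ (x i * exp (t * v i))ᵢ` multiplies the monomial of exponent `μ` by
`exp (t * ⟨v, μ⟩)`, so for large `t` the terms with `μ ∈ N(f)_v` dominate: if `f_{|N(f)_v}` is
negative at `x`, then every restriction `f_{|S}` with `N(f)_v ⊆ S` is eventually negative along the
curve. Hence membership in `Σ(f₁, …, f_k)` passes from `v` to every `w` with `N(fᵢ)_v ⊆ N(fᵢ)_w` for
all `i`. If `v` is in the relative interior of `C` and `w ∈ C`, then `v` lies strictly between `w`
and some `u ∈ C`. Any point of the face of `N(fᵢ)` defining `C` maximizes both `⟨u, ·⟩` and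
`⟨w, ·⟩`, so a maximizer of their positive combination `⟨v, ·⟩` maximizes `⟨w, ·⟩` as well, which is
the required inclusion.
-/

open Filter Topology

theorem eventually_lineMap_mem_of_mem_intrinsicInterior {𝕜 V P : Type*} [Ring 𝕜]
    [TopologicalSpace 𝕜] [AddCommGroup V] [TopologicalSpace V] [Module 𝕜 V] [ContinuousSMul 𝕜 V]
    [TopologicalSpace P] [AddTorsor V P] [IsTopologicalAddTorsor P] {C : Set P} {v w : P}
    (hv : v ∈ intrinsicInterior 𝕜 C) (hw : w ∈ C) :
    ∀ᶠ t in 𝓝 (0 : 𝕜), AffineMap.lineMap v w t ∈ C := by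
  obtain ⟨y, hy, rfl⟩ := mem_intrinsicInterior.1 hv
  let line : 𝕜 → affineSpan 𝕜 C := fun t =>
    ⟨AffineMap.lineMap (y : P) w t, AffineMap.lineMap_mem t y.2 (subset_affineSpan 𝕜 C hw)⟩
  have line_zero : line 0 = y := Subtype.ext (AffineMap.lineMap_apply_zero _ _)
  have line_continuous : Continuous line := AffineMap.lineMap_continuous.subtype_mk _
  have C_mem_nhds : ((↑) ⁻¹' C : Set (affineSpan 𝕜 C)) ∈ 𝓝 (line 0) :=
    line_zero ▸ mem_interior_iff_mem_nhds.1 hy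
  exact line_continuous.continuousAt C_mem_nhds

theorem exists_mem_openSegment_of_mem_intrinsicInterior {𝕜 E : Type*} [Field 𝕜] [LinearOrder 𝕜]
    [IsStrictOrderedRing 𝕜] [TopologicalSpace 𝕜] [OrderTopology 𝕜] [AddCommGroup E]
    [TopologicalSpace E] [IsTopologicalAddGroup E] [Module 𝕜 E] [ContinuousSMul 𝕜 E]
    {C : Set E} {v w : E} (hv : v ∈ intrinsicInterior 𝕜 C) (hw : w ∈ C) :
    ∃ u ∈ C, v ∈ openSegment 𝕜 u w := by
  obtain ⟨t, hu, ht : t < 0⟩ :=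
    ((eventually_lineMap_mem_of_mem_intrinsicInterior hv hw).filter_mono nhdsWithin_le_nhds
      |>.and self_mem_nhdsWithin).exists (f := 𝓝[<] (0 : 𝕜))
  have h_pos : 0 < 1 - t := by linarith
  refine ⟨_, hu, 1 / (1 - t), -t / (1 - t), by positivity, div_pos (neg_pos.2 ht) h_pos, ?_, ?_⟩
  · field_simp
    ring
  · rw [AffineMap.lineMap_apply_module]
    match_scalars
    · field_simp
    · field_simp
      ring

namespace Signomial

variable {n k : ℕ} {f : Signomial n} {S : Set (Fin n → ℝ)} {u v w x p μ : Fin n → ℝ}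

theorem dot_smul_add_smul (a b : ℝ) (u w μ : Fin n → ℝ) :
    dot (a • u + b • w) μ = a * dot u μ + b * dot w μ := by
  change (a • u + b • w) ⬝ᵥ μ = a * (u ⬝ᵥ μ) + b * (w ⬝ᵥ μ)
  rw [add_dotProduct, smul_dotProduct, smul_dotProduct, smul_eq_mul, smul_eq_mul]

theorem mem_faceAt_iff_dot_le (hp : p ∈ f.faceAt v) :
    μ ∈ f.faceAt v ↔ μ ∈ f.newton ∧ dot v p ≤ dot v μ :=
  ⟨fun hμ => ⟨hμ.1, hμ.2 p hp.1⟩, fun hμ => ⟨hμ.1, fun ν hν => (hp.2 ν hν).trans hμ.2⟩⟩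

theorem faceAt_subset_of_mem_openSegment (hv : v ∈ openSegment ℝ u w)
    (h : (f.faceAt u ∩ f.faceAt w).Nonempty) : f.faceAt v ⊆ f.faceAt w := by
  obtain ⟨a, b, ha, hb, -, rfl⟩ := hv
  obtain ⟨p, hpu, hpw⟩ := h
  intro μ hμ
  have h_le_v : a * dot u p + b * dot w p ≤ a * dot u μ + b * dot w μ := by
    simpa only [dot_smul_add_smul] using hμ.2 p hpu.1
  have h_le_u : a * dot u μ ≤ a * dot u p := by gcongr; exact hpu.2 μ hμ.1
  have h_le_w : b * dot w p ≤ b * dot w μ := by linarith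
  exact (mem_faceAt_iff_dot_le hpw).2 ⟨hμ.1, le_of_mul_le_mul_left h_le_w hb⟩

/-- The curve `t ↦ (x i * exp (t * v i))ᵢ` through `x` in direction `v`. In logarithmic coordinates
it is the line `t ↦ log x + t v`; it degenerates `f` to its restriction to the face `N(f)_v`. -/
noncomputable def expCurve (v x : Fin n → ℝ) (t : ℝ) : Fin n → ℝ :=
  fun i => x i * Real.exp (t * v i)

theorem expCurve_mem_posOrth (hx : x ∈ posOrth n) (v : Fin n → ℝ) (t : ℝ) :
    expCurve v x t ∈ posOrth n :=
  fun i => mul_pos (hx i) (Real.exp_pos _)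

theorem mono_expCurve (hx : x ∈ posOrth n) (v μ : Fin n → ℝ) (t : ℝ) :
    mono (expCurve v x t) μ = Real.exp (t * dot v μ) * mono x μ := by
  simp only [mono, dot, expCurve, Finset.mul_sum, Real.exp_sum, ← Finset.prod_mul_distrib]
  refine Finset.prod_congr rfl fun i _ => ?_
  rw [Real.mul_rpow (hx i).le (Real.exp_pos _).le, ← Real.exp_mul, mul_assoc, mul_comm]

theorem tendsto_exp_neg_mul_mono_expCurve [Decidable (μ ∈ f.faceAt v)] (hx : x ∈ posOrth n)
    (hp : p ∈ f.faceAt v) (hμ : μ ∈ f.newton) :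
    Tendsto (fun t => Real.exp (-(t * dot v p)) * mono (expCurve v x t) μ) atTop
      (𝓝 (if μ ∈ f.faceAt v then mono x μ else 0)) := by
  have h_exp (t : ℝ) : Real.exp (-(t * dot v p)) * mono (expCurve v x t) μ =
      Real.exp (t * (dot v μ - dot v p)) * mono x μ := by
    rw [mono_expCurve hx, ← mul_assoc, ← Real.exp_add]
    ring_nf
  simp only [h_exp]
  split_ifs with h_mem
  · have h_eq : dot v μ = dot v p := (hp.2 μ hμ).antisymm (h_mem.2 p hp.1)
    simp [h_eq]
  · have h_neg : dot v μ - dot v p < 0 :=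
      sub_neg.2 (not_le.1 fun h => h_mem ((mem_faceAt_iff_dot_le hp).2 ⟨hμ, h⟩))
    simpa using
      (Real.tendsto_exp_atBot.comp (tendsto_id.atTop_mul_const_of_neg h_neg)).mul_const (mono x μ)

theorem tendsto_exp_neg_mul_evalOn_expCurve (hx : x ∈ posOrth n) (hp : p ∈ f.faceAt v)
    (hS : f.faceAt v ⊆ S) :
    Tendsto (fun t => Real.exp (-(t * dot v p)) * f.evalOn S (expCurve v x t)) atTop
      (𝓝 (f.evalOn (f.faceAt v) x)) := by
  classical
  simp only [evalOn, Finset.mul_sum]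
  refine tendsto_finsetSum _ fun μ hμ => ?_
  by_cases hμS : μ ∈ S
  · simpa [hμS, mul_left_comm] using
      (tendsto_exp_neg_mul_mono_expCurve hx hp (subset_convexHull ℝ _ hμ)).const_mul (f.coeff μ)
  · simp [hμS, mt (@hS μ) hμS]

theorem nonempty_of_evalOn_ne_zero (h : f.evalOn S x ≠ 0) : S.Nonempty := by
  obtain ⟨μ, -, hμ⟩ := Finset.exists_ne_zero_of_sum_ne_zero h
  exact ⟨μ, of_not_not fun hμS => hμ (if_neg hμS)⟩

theorem eventually_evalOn_expCurve_neg (hx : x ∈ posOrth n) (hS : f.faceAt v ⊆ S)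
    (h_neg : f.evalOn (f.faceAt v) x < 0) :
    ∀ᶠ t in atTop, f.evalOn S (expCurve v x t) < 0 := by
  obtain ⟨p, hp⟩ := nonempty_of_evalOn_ne_zero h_neg.ne
  filter_upwards
    [(tendsto_exp_neg_mul_evalOn_expCurve hx hp hS).eventually_lt_const h_neg] with t ht
  exact (pos_iff_neg_of_mul_neg ht).1 (Real.exp_pos _)

theorem mem_actualNegCone_of_faceAt_subset {f : Fin k → Signomial n} (hv : v ∈ actualNegCone f)
    (hvw : ∀ i, (f i).faceAt v ⊆ (f i).faceAt w) : w ∈ actualNegCone f := by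
  obtain ⟨x, hx, h_neg⟩ := hv
  obtain ⟨t, ht⟩ := (eventually_all.2 fun i =>
    eventually_evalOn_expCurve_neg hx (hvw i) (h_neg i)).exists
  exact ⟨expCurve v x t, expCurve_mem_posOrth hx v t, ht⟩

end Signomial

open Signomial in
theorem relint_actualNegCone_general {n k : ℕ} (f : Fin k → Signomial n) {C : Set (Fin n → ℝ)}
    (hC : ∀ i, (⋂ u ∈ C, (f i).faceAt u).Nonempty) {v : Fin n → ℝ}
    (hv : v ∈ intrinsicInterior ℝ C) (hvS : v ∈ actualNegCone f) :
    C ⊆ actualNegCone f := by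
  intro w hw
  obtain ⟨u, hu, huw⟩ := exists_mem_openSegment_of_mem_intrinsicInterior hv hw
  refine mem_actualNegCone_of_faceAt_subset hvS fun i =>
    faceAt_subset_of_mem_openSegment huw ((hC i).mono ?_)
  exact Set.subset_inter (Set.biInter_subset_of_mem hu) (Set.biInter_subset_of_mem hw)

open Signomial in
/-- If `C` is a cone of the common refinement of the normal fans of
`f₁, …, f_k` and some `v` in the relative interior of `C` lies in `Σ(f₁, …, f_k)`,
then `C ⊆ Σ(f₁, …, f_k)`. -/
theorem relint_actualNegCone {n k : ℕ} (f : Fin k → Signomial n)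
    (C : Set (Fin n → ℝ))
    (hC : ∃ F : Fin k → Set (Fin n → ℝ),
      (∀ i, (f i).IsFace (F i)) ∧ C = ⋂ i, (f i).normalCone (F i))
    (v : Fin n → ℝ) (hv : v ∈ intrinsicInterior ℝ C)
    (hvS : v ∈ actualNegCone f) :
    C ⊆ actualNegCone f := by
  obtain ⟨F, hF, rfl⟩ := hC
  refine relint_actualNegCone_general f (fun i => (hF i).1.mono ?_) hv hvS
  exact Set.subset_iInter₂ fun u hu => Set.mem_iInter.1 hu i
end

section
/- Let f₁, …, f_k be signomials on ℝⁿ_{>0}. Then the actual negative normal cone is contained in the intersection of the negative normal cones: Σ(f₁, …, f_k) ⊆ ⋂_{i=1}^{k} N_{f_i}^-. In particular, if the restriction of a signomial f to a face F of N(f) takes a negative value on ℝⁿ_{>0}, then F contains a negative exponent vector of f. -/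
namespace Signomial

variable {n : ℕ} {x : Fin n → ℝ}

theorem mono_pos (hx : x ∈ posOrth n) (μ : Fin n → ℝ) : 0 < mono x μ :=
  Finset.prod_pos fun i _ => Real.rpow_pos_of_pos (hx i) (μ i)

variable {f : Signomial n} {S : Set (Fin n → ℝ)}

theorem evalOn_nonneg (hf : ∀ μ ∈ f.supp, μ ∈ S → 0 ≤ f.coeff μ) (hx : x ∈ posOrth n) :
    0 ≤ f.evalOn S x :=
  Finset.sum_nonneg fun μ hμ => by
    split_ifs with hμS
    · exact mul_nonneg (hf μ hμ hμS) (mono_pos hx μ).le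
    · exact le_rfl

theorem exists_coeff_neg_of_evalOn_neg (hx : x ∈ posOrth n) (h : f.evalOn S x < 0) :
    ∃ μ ∈ f.supp, f.coeff μ < 0 ∧ μ ∈ S := by
  contrapose! h
  exact evalOn_nonneg (fun μ hμ hμS => not_lt.mp fun hneg => h μ hμ hneg hμS) hx

theorem actualNegCone_subset_iInter_negCone {k : ℕ} (f : Fin k → Signomial n) :
    actualNegCone f ⊆ ⋂ i, negCone (f i) := by
  rintro v ⟨x, hx, hneg⟩
  exact Set.mem_iInter.mpr fun i => exists_coeff_neg_of_evalOn_neg hx (hneg i)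

end Signomial

open Signomial in
theorem actualNegCone_subset_negCones_general :
    (∀ (n k : ℕ) (f : Fin k → Signomial n),
      actualNegCone f ⊆ ⋂ i, negCone (f i)) ∧
    (∀ (n : ℕ) (f : Signomial n) (S : Set (Fin n → ℝ)),
      ∀ x ∈ posOrth n, f.evalOn S x < 0 →
        ∃ μ ∈ f.supp, f.coeff μ < 0 ∧ μ ∈ S) :=
  ⟨fun _ _ => actualNegCone_subset_iInter_negCone,
    fun _ _ _ _ => exists_coeff_neg_of_evalOn_neg⟩

open Signomial in
/-- `Σ(f₁, …, f_k) ⊆ ⋂ᵢ N_{fᵢ}^-`. In particular, if the restriction of a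
signomial `f` to a face `F` of `N(f)` takes a negative value on `ℝⁿ_{>0}`, then `F`
contains a negative exponent vector of `f`. -/
theorem actualNegCone_subset_negCones :
    (∀ (n k : ℕ) (f : Fin k → Signomial n),
      actualNegCone f ⊆ ⋂ i, negCone (f i)) ∧
    (∀ (n : ℕ) (f : Signomial n) (F : Set (Fin n → ℝ)), f.IsFace F →
      ∀ x ∈ posOrth n, f.evalOn F x < 0 →
        ∃ μ ∈ f.supp, f.coeff μ < 0 ∧ μ ∈ F) :=
  actualNegCone_subset_negCones_general.imp_right fun h n f F _ => h n f F
end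

section
/- Let g : ℝ_{>0} → ℝ, g(t) = ∑_{i=1}^{d} a_i t^{ν_i} be a univariate signomial with real exponents ν₁ < ν₂ < … < ν_d and nonzero real coefficients a₁, …, a_d. Suppose there exist p ∈ {2, …, d} and ε > 0 such that (a_d − ε) t^{ν_d} + ∑_{i=p}^{d−1} a_i t^{ν_i} > 0 for all t > 0. Then for every δ with 0 < δ ≤ ν_p − ν_{p−1}, every t₀ ∈ ℝ_{>0} with g(t₀) = 0 satisfies t₀ ≤ max{ 1, ( (1/ε) ∑_{i=1}^{p−1} |a_i| )^{1/δ} }. -/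
/-!
At a root `t > 1`, the low-order terms must cancel the remaining ones, which by hypothesis amount to
at least `ε * t ^ κ` with `κ` the top exponent. Every low-order exponent is at most `κ - δ`, so the
low-order terms amount to at most `(∑ |a i|) * t ^ (κ - δ)`. Dividing by `t ^ (κ - δ)` leaves
`ε * t ^ δ ≤ ∑ |a i|`.
-/

theorem abs_sum_mul_rpow_le {ι : Type*} {s : Finset ι} {a ν : ι → ℝ} {t μ : ℝ} (ht : 1 ≤ t)
    (hν : ∀ i ∈ s, ν i ≤ μ) :
    |∑ i ∈ s, a i * t ^ ν i| ≤ (∑ i ∈ s, |a i|) * t ^ μ := by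
  have ht0 : 0 ≤ t := zero_le_one.trans ht
  calc |∑ i ∈ s, a i * t ^ ν i|
      ≤ ∑ i ∈ s, |a i * t ^ ν i| := Finset.abs_sum_le_sum_abs _ _
    _ = ∑ i ∈ s, |a i| * t ^ ν i := by
        simp only [abs_mul, abs_of_nonneg (Real.rpow_nonneg ht0 _)]
    _ ≤ ∑ i ∈ s, |a i| * t ^ μ := Finset.sum_le_sum fun i hi =>
        mul_le_mul_of_nonneg_left (Real.rpow_le_rpow_of_exponent_le ht (hν i hi)) (abs_nonneg _)
    _ = (∑ i ∈ s, |a i|) * t ^ μ := (Finset.sum_mul _ _ _).symm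

theorem le_rpow_inv_of_mul_rpow_le_mul_rpow_sub {t ε A κ δ : ℝ} (ht : 0 < t) (hε : 0 < ε)
    (hδ : 0 < δ) (h : ε * t ^ κ ≤ A * t ^ (κ - δ)) : t ≤ (ε⁻¹ * A) ^ δ⁻¹ := by
  have hmul : ε * t ^ δ * t ^ (κ - δ) ≤ A * t ^ (κ - δ) := by
    rwa [mul_assoc, ← Real.rpow_add ht, add_sub_cancel]
  have hpow : t ^ δ ≤ ε⁻¹ * A :=
    (le_inv_mul_iff₀ hε).2 (le_of_mul_le_mul_right hmul (Real.rpow_pos_of_pos ht _))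
  exact (Real.le_rpow_inv_iff_of_pos ht.le ((Real.rpow_nonneg ht.le δ).trans hpow) hδ).2 hpow

theorem add_le_of_mem_Ico_of_le_sub_pred {ν : ℕ → ℝ} {m d p i : ℕ} {δ : ℝ}
    (hν : MonotoneOn ν (Set.Icc m d)) (hpd : p ≤ d) (hδ : δ ≤ ν p - ν (p - 1))
    (hi : i ∈ Finset.Ico m p) : ν i + δ ≤ ν d := by
  obtain ⟨hmi, hip⟩ := Finset.mem_Ico.1 hi
  have hlow : ν i ≤ ν (p - 1) := hν ⟨hmi, by omega⟩ ⟨by omega, by omega⟩ (by omega)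
  have hhigh : ν p ≤ ν d := hν ⟨by omega, hpd⟩ ⟨by omega, le_rfl⟩ hpd
  linarith

theorem sum_Icc_eq_sum_Ico_add_sum_Ico_add {M : Type*} [AddCommMonoid M] (f : ℕ → M)
    {m p n : ℕ} (hmp : m ≤ p) (hpn : p ≤ n) :
    ∑ i ∈ Finset.Icc m n, f i =
      ∑ i ∈ Finset.Ico m p, f i + (∑ i ∈ Finset.Ico p n, f i + f n) := by
  rw [← Finset.sum_Ico_succ_top hpn, Finset.sum_Ico_consecutive f hmp (by omega),
    Finset.Ico_add_one_right_eq_Icc]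

theorem signomial_root_bound_general {ι : Type*} {low mid : Finset ι} {top : ι} {a ν : ι → ℝ}
    {ε δ t : ℝ} (hε : 0 < ε) (hδ : 0 < δ) (hgap : ∀ i ∈ low, ν i + δ ≤ ν top)
    (hdom : 0 ≤ (a top - ε) * t ^ ν top + ∑ i ∈ mid, a i * t ^ ν i)
    (hroot : ∑ i ∈ low, a i * t ^ ν i +
      (∑ i ∈ mid, a i * t ^ ν i + a top * t ^ ν top) ≤ 0) :
    t ≤ max 1 ((ε⁻¹ * ∑ i ∈ low, |a i|) ^ (1 / δ)) := by
  rcases le_or_gt t 1 with ht | ht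
  · exact le_max_of_le_left ht
  refine le_max_of_le_right ?_
  rw [one_div]
  apply le_rpow_inv_of_mul_rpow_le_mul_rpow_sub (zero_lt_one.trans ht) hε hδ (κ := ν top)
  calc ε * t ^ ν top
      ≤ -∑ i ∈ low, a i * t ^ ν i := by linarith
    _ ≤ |∑ i ∈ low, a i * t ^ ν i| := neg_le_abs _
    _ ≤ (∑ i ∈ low, |a i|) * t ^ (ν top - δ) :=
        abs_sum_mul_rpow_le ht.le fun i hi => le_sub_iff_add_le.2 (hgap i hi)

/-- generalized Cauchy bound: Let `g(t) = ∑_{i=1}^d a_i t^{ν_i}` be a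
univariate signomial with strictly increasing real exponents and nonzero coefficients.
If there are `p ∈ {2, …, d}` and `ε > 0` such that
`(a_d − ε) t^{ν_d} + ∑_{i=p}^{d−1} a_i t^{ν_i} > 0` for all `t > 0`, then for every
`0 < δ ≤ ν_p − ν_{p−1}`, every positive root `t₀` of `g` satisfies
`t₀ ≤ max 1 ((ε⁻¹ ∑_{i=1}^{p−1} |a_i|)^{1/δ})`. -/
theorem signomial_root_bound (d : ℕ) (a ν : ℕ → ℝ)
    (ha : ∀ i ∈ Finset.Icc 1 d, a i ≠ 0)
    (hν : StrictMonoOn ν (Set.Icc 1 d))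
    (p : ℕ) (hp1 : 2 ≤ p) (hp2 : p ≤ d)
    (ε : ℝ) (hε : 0 < ε)
    (hpos : ∀ t : ℝ, 0 < t →
      0 < (a d - ε) * t ^ (ν d) + ∑ i ∈ Finset.Ico p d, a i * t ^ (ν i))
    (δ : ℝ) (hδ0 : 0 < δ) (hδ : δ ≤ ν p - ν (p - 1))
    (t₀ : ℝ) (ht₀ : 0 < t₀)
    (hroot : ∑ i ∈ Finset.Icc 1 d, a i * t₀ ^ (ν i) = 0) :
    t₀ ≤ max 1 ((ε⁻¹ * ∑ i ∈ Finset.Ico 1 p, |a i|) ^ (1 / δ)) := by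
  rw [sum_Icc_eq_sum_Ico_add_sum_Ico_add _ (by omega) hp2] at hroot
  exact signomial_root_bound_general hε hδ0 (top := d) (ν := ν)
    (fun _ => add_le_of_mem_Ico_of_le_sub_pred hν.monotoneOn hp2 hδ) (hpos t₀ ht₀).le hroot.le
end

section
/- Let f₁, …, f_k be signomials on ℝⁿ_{>0} and let w ∈ ⋂_{i=1}^{k} N_{f_i}^-. If there exists v ∈ ℝⁿ such that for every i = 1, …, k the face N(f_i)_v is a negative vertex of N(f_i) contained in the face N(f_i)_w, then w lies in the closure of the interior of ⋂_{i=1}^{k} N_{f_i}^-. -/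
/-! The normal cone of a vertex is convex, and a direction cutting out exactly that vertex lies in
its interior. So `v` is interior to the finite intersection of the normal cones of the given
vertices. A convex set with an interior point is contained in the closure of its interior, and this
intersection contains `w` and is itself contained in `⋂ᵢ N_{fᵢ}^-`. -/

namespace Signomial

variable {n : ℕ} {f : Signomial n} {u v w μ ν : Fin n → ℝ}

theorem dot_eq_dotProduct (v μ : Fin n → ℝ) : dot v μ = v ⬝ᵥ μ := rfl

theorem continuous_dot_left (μ : Fin n → ℝ) : Continuous fun v ↦ dot v μ := by
  simp only [dot]
  fun_prop

theorem mem_newton_of_mem_supp (hμ : μ ∈ f.supp) : μ ∈ f.newton :=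
  subset_convexHull ℝ _ hμ

theorem dot_le_of_mem_newton {c : ℝ} (h : ∀ ν ∈ f.supp, dot u ν ≤ c) (hμ : μ ∈ f.newton) :
    dot u μ ≤ c := by
  have hconv : Convex ℝ {ν | dot u ν ≤ c} :=
    convex_halfSpace_le ⟨dotProduct_add u, fun a ν ↦ dotProduct_smul a u ν⟩ c
  exact convexHull_min h hconv hμ

theorem mem_faceAt_iff_forall_mem_supp :
    μ ∈ f.faceAt u ↔ μ ∈ f.newton ∧ ∀ ν ∈ f.supp, dot u ν ≤ dot u μ :=
  and_congr_right fun _ ↦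
    ⟨fun h ν hν ↦ h ν (mem_newton_of_mem_supp hν), fun h _ hν ↦ dot_le_of_mem_newton h hν⟩

theorem dot_lt_of_faceAt_eq_singleton (hv : f.faceAt v = {μ}) (hν : ν ∈ f.newton) (hne : ν ≠ μ) :
    dot v ν < dot v μ := by
  have hμ : μ ∈ f.faceAt v := hv ▸ Set.mem_singleton μ
  by_contra! hle
  have hν' : ν ∈ f.faceAt v := ⟨hν, fun ξ hξ ↦ (hμ.2 ξ hξ).trans hle⟩
  exact hne (by simpa only [hv, Set.mem_singleton_iff] using hν')

theorem convex_normalCone (f : Signomial n) (F : Set (Fin n → ℝ)) :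
    Convex ℝ (f.normalCone F) := by
  intro u hu v hv a b ha hb _ μ hμ
  refine ⟨(hu hμ).1, fun ν hν ↦ ?_⟩
  have hu_le := (hu hμ).2 ν hν
  have hv_le := (hv hμ).2 ν hν
  simp only [dot_eq_dotProduct, add_dotProduct, smul_dotProduct, smul_eq_mul]
    at hu_le hv_le ⊢
  gcongr

theorem mem_interior_normalCone_of_faceAt_eq_singleton (hv : f.faceAt v = {μ}) :
    v ∈ interior (f.normalCone {μ}) := by
  have hμ : μ ∈ f.faceAt v := hv ▸ Set.mem_singleton μ
  have hnear : ∀ᶠ u in nhds v, ∀ ν ∈ f.supp, dot u ν ≤ dot u μ := by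
    refine (Filter.eventually_all_finset f.supp).2 fun ν hν ↦ ?_
    obtain rfl | hne := eq_or_ne ν μ
    · exact Filter.Eventually.of_forall fun _ ↦ le_rfl
    · have hlt := dot_lt_of_faceAt_eq_singleton hv (mem_newton_of_mem_supp hν) hne
      exact ((continuous_dot_left ν).continuousAt.eventually_lt
        (continuous_dot_left μ).continuousAt hlt).mono fun _ ↦ le_of_lt
  refine mem_interior_iff_mem_nhds.2 (hnear.mono fun u hu ↦ ?_)
  exact Set.singleton_subset_iff.2 (mem_faceAt_iff_forall_mem_supp.2 ⟨hμ.1, hu⟩)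

theorem normalCone_singleton_subset_negCone (hμ : μ ∈ f.supp) (hneg : f.coeff μ < 0) :
    f.normalCone {μ} ⊆ f.negCone :=
  fun _ hu ↦ ⟨μ, hμ, hneg, hu rfl⟩

theorem mem_closure_interior_iInter_normalCone_singleton {ι : Type*} [Finite ι]
    {f : ι → Signomial n} {μ : ι → Fin n → ℝ} (hv : ∀ i, (f i).faceAt v = {μ i})
    (hw : ∀ i, μ i ∈ (f i).faceAt w) :
    w ∈ closure (interior (⋂ i, (f i).normalCone {μ i})) := by
  have hconv : Convex ℝ (⋂ i, (f i).normalCone {μ i}) :=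
    convex_iInter fun i ↦ convex_normalCone (f i) {μ i}
  have hv_mem : v ∈ interior (⋂ i, (f i).normalCone {μ i}) := by
    rw [interior_iInter_of_finite]
    exact Set.mem_iInter.2 fun i ↦ mem_interior_normalCone_of_faceAt_eq_singleton (hv i)
  rw [hconv.closure_interior_eq_closure_of_nonempty_interior ⟨v, hv_mem⟩]
  exact subset_closure (Set.mem_iInter.2 fun i ↦ Set.singleton_subset_iff.2 (hw i))

end Signomial

open Signomial in
/-- If `w ∈ ⋂ᵢ N_{fᵢ}^-` and there is `v` such that for every `i` the face
`N(fᵢ)_v` is a negative vertex of `N(fᵢ)` contained in `N(fᵢ)_w`, then `w` lies in the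
closure of the interior of `⋂ᵢ N_{fᵢ}^-`. -/
theorem mem_closure_interior_of_negVertex {n k : ℕ} (f : Fin k → Signomial n)
    (w : Fin n → ℝ) (hw : w ∈ ⋂ i, negCone (f i))
    (h : ∃ v : Fin n → ℝ, ∀ i, ∃ μ : Fin n → ℝ,
      (f i).faceAt v = {μ} ∧ μ ∈ (f i).supp ∧ (f i).coeff μ < 0 ∧
        μ ∈ (f i).faceAt w) :
    w ∈ closure (interior (⋂ i, negCone (f i))) := by
  obtain ⟨v, h⟩ := h
  choose μ hv hsupp hneg hwμ using h
  have hsub : ⋂ i, (f i).normalCone {μ i} ⊆ ⋂ i, negCone (f i) :=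
    Set.iInter_mono fun i ↦ normalCone_singleton_subset_negCone (hsupp i) (hneg i)
  exact closure_mono (interior_mono hsub)
    (mem_closure_interior_iInter_normalCone_singleton hv hwμ)
end

section
/- Let f be a signomial on ℝⁿ_{>0} such that every negative exponent vector of f lies in the interior of the Newton polytope, i.e. σ₋(f) ⊆ int(N(f)). Then the image of S(f) = f^{-1}(ℝ_{<0}) under the coordinate-wise natural logarithm map Log : ℝⁿ_{>0} → ℝⁿ, x ↦ (ln x₁, …, ln x_n), is a bounded subset of ℝⁿ. -/
/-!
In logarithmic coordinates `y = Log x`, a signomial becomes the exponential sum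
`∑ c_μ exp ⟨y, μ⟩`. If a ball of radius `r` around each negative exponent lies in the Newton
polytope, then the largest value of `⟨y, ·⟩` on the support exceeds its value at every negative
exponent by at least `r ‖y‖`. If `y ≠ 0`, it is thus attained at a positive exponent `ν`, so a
negative value of the sum forces `c_ν exp (r ‖y‖) < ∑ |c_μ|`, which bounds `‖y‖`.
-/

theorem mul_exp_lt_sum_abs_of_sum_mul_exp_neg {ι : Type*} {s : Finset ι} {c a : ι → ℝ} {j : ι}
    {δ : ℝ} (hj : j ∈ s) (hgap : ∀ i ∈ s, c i < 0 → a i ≤ a j - δ)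
    (hneg : ∑ i ∈ s, c i * Real.exp (a i) < 0) :
    c j * Real.exp δ < ∑ i ∈ s, |c i| := by
  set E := Real.exp (a j - δ)
  have hE : 0 < E := Real.exp_pos _
  have hterm : ∀ i ∈ s, 0 ≤ c i * Real.exp (a i) + |c i| * E := by
    intro i hi
    rcases lt_or_ge (c i) 0 with hc | hc
    · have hexp : Real.exp (a i) ≤ E := Real.exp_le_exp.2 (hgap i hi hc)
      rw [abs_of_neg hc]
      linarith [mul_le_mul_of_nonpos_left hexp hc.le]
    · positivity
  refine lt_of_mul_lt_mul_right ?_ hE.le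
  calc c j * Real.exp δ * E = c j * Real.exp (a j) := by
        rw [mul_assoc, ← Real.exp_add, add_sub_cancel]
    _ ≤ c j * Real.exp (a j) + |c j| * E := le_add_of_nonneg_right (by positivity)
    _ ≤ ∑ i ∈ s, (c i * Real.exp (a i) + |c i| * E) := Finset.single_le_sum hterm hj
    _ = ∑ i ∈ s, c i * Real.exp (a i) + (∑ i ∈ s, |c i|) * E := by
        rw [Finset.sum_add_distrib, Finset.sum_mul]
    _ < (∑ i ∈ s, |c i|) * E := add_lt_of_neg_left _ hneg

section NormedSpace

open Metric Bornology

variable {E : Type*} [NormedAddCommGroup E] [NormedSpace ℝ E]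

theorem mul_norm_le_sub_of_closedBall_subset_convexHull {s : Set E} {φ : StrongDual ℝ E}
    {μ : E} {r M : ℝ} (hr : 0 < r) (hball : closedBall μ r ⊆ convexHull ℝ s)
    (hM : ∀ x ∈ s, φ x ≤ M) : r * ‖φ‖ ≤ M - φ μ := by
  have hhull : convexHull ℝ s ⊆ {x | φ x ≤ M} :=
    convexHull_min hM (convex_halfSpace_le φ.isLinear M)
  have hle : ∀ z ∈ closedBall (0 : E) r, φ z ≤ M - φ μ := by
    intro z hz
    have hmem : φ (μ + z) ≤ M := hhull (hball (by simpa using hz))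
    rw [map_add] at hmem
    linarith
  have habs : ∀ z ∈ closedBall (0 : E) r, ‖φ z‖ ≤ M - φ μ := fun z hz =>
    abs_le'.2 ⟨hle z hz, by simpa using hle (-z) (by simpa using hz)⟩
  rw [mul_comm, ← le_div_iff₀ hr]
  exact φ.opNorm_bound_of_ball_bound hr _ habs

theorem exists_pos_forall_mul_norm_le_sub {s t : Set E} (ht : IsCompact t)
    (hts : t ⊆ interior (convexHull ℝ s)) :
    ∃ r > 0, ∀ φ : StrongDual ℝ E, ∀ M, (∀ x ∈ s, φ x ≤ M) → ∀ μ ∈ t, r * ‖φ‖ ≤ M - φ μ := by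
  obtain ⟨r, hr, hthick⟩ := ht.exists_cthickening_subset_open isOpen_interior hts
  exact ⟨r, hr, fun φ M hM μ hμ => mul_norm_le_sub_of_closedBall_subset_convexHull hr
    ((closedBall_subset_cthickening hμ r).trans (hthick.trans interior_subset)) hM⟩

theorem isBounded_setOf_sum_mul_exp_neg (s : Finset E) (c : E → ℝ)
    (h : ∀ μ ∈ s, c μ ≤ 0 → μ ∈ interior (convexHull ℝ (s : Set E))) :
    IsBounded {φ : StrongDual ℝ E | ∑ μ ∈ s, c μ * Real.exp (φ μ) < 0} := by
  obtain ⟨r, hr, hgap⟩ := exists_pos_forall_mul_norm_le_sub (s := s) (t := {μ ∈ s | c μ ≤ 0})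
    (s.finite_toSet.sep _).isCompact fun μ hμ => h μ hμ.1 hμ.2
  let maximizedAt (ν : E) : Set (StrongDual ℝ E) :=
    {φ | (∀ μ ∈ s, φ μ ≤ φ ν) ∧ ∑ μ ∈ s, c μ * Real.exp (φ μ) < 0}
  have hcover : {φ : StrongDual ℝ E | ∑ μ ∈ s, c μ * Real.exp (φ μ) < 0} ⊆
      ⋃ ν ∈ s, maximizedAt ν := by
    intro φ (hφ : ∑ μ ∈ s, c μ * Real.exp (φ μ) < 0)
    obtain ⟨ν, hν, hmax⟩ := s.exists_max_image φ (Finset.nonempty_of_sum_ne_zero hφ.ne)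
    exact Set.mem_biUnion hν ⟨hmax, hφ⟩
  refine ((isBounded_biUnion_finset s).2 fun ν hν => ?_).subset hcover
  rcases le_or_gt (c ν) 0 with hc | hc
  · refine isBounded_iff_forall_norm_le.2 ⟨0, fun φ ⟨hmax, _⟩ => ?_⟩
    have hle : r * ‖φ‖ ≤ 0 := by simpa using hgap φ _ hmax ν ⟨hν, hc⟩
    exact nonpos_of_mul_nonpos_right hle hr
  · refine isBounded_iff_forall_norm_le.2
      ⟨(∑ μ ∈ s, |c μ|) / (c ν * r), fun φ ⟨hmax, hneg⟩ => ?_⟩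
    have hexp : c ν * Real.exp (r * ‖φ‖) < ∑ μ ∈ s, |c μ| :=
      mul_exp_lt_sum_abs_of_sum_mul_exp_neg hν
        (fun μ hμ hcμ => le_sub_comm.1 (hgap φ _ hmax μ ⟨hμ, hcμ.le⟩)) hneg
    rw [le_div_iff₀ (by positivity)]
    calc ‖φ‖ * (c ν * r) = c ν * (r * ‖φ‖) := by ring
      _ ≤ c ν * Real.exp (r * ‖φ‖) := by
          gcongr
          linarith [Real.add_one_le_exp (r * ‖φ‖)]
      _ ≤ ∑ μ ∈ s, |c μ| := hexp.le

end NormedSpace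

namespace Signomial

variable {n : ℕ}

/-- The functional `dot v` in the dual of `Fin n → ℝ`; since the latter carries the sup norm,
`‖dotCLM v‖` is the `ℓ¹` norm of `v`. -/
noncomputable def dotCLM (v : Fin n → ℝ) : StrongDual ℝ (Fin n → ℝ) :=
  ∑ i, v i • ContinuousLinearMap.proj i

theorem dotCLM_apply (v μ : Fin n → ℝ) : dotCLM v μ = dot v μ := by
  simp [dotCLM, dot]

theorem norm_le_norm_dotCLM (v : Fin n → ℝ) : ‖v‖ ≤ ‖dotCLM v‖ := by
  refine (pi_norm_le_iff_of_nonneg (norm_nonneg _)).2 fun i => ?_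
  calc ‖v i‖ = ‖dotCLM v (Pi.single i 1)‖ := by simp [dotCLM_apply, dot, Pi.single_apply]
    _ ≤ ‖dotCLM v‖ := (dotCLM v).unit_le_opNorm _ (by rw [Pi.norm_single, norm_one])

theorem mono_eq_exp_dot_log {x : Fin n → ℝ} (hx : x ∈ posOrth n) (μ : Fin n → ℝ) :
    mono x μ = Real.exp (dot (fun i => Real.log (x i)) μ) := by
  rw [mono, dot, Real.exp_sum]
  exact Finset.prod_congr rfl fun i _ => Real.rpow_def_of_pos (hx i) _

theorem eval_eq_sum_mul_exp (f : Signomial n) {x : Fin n → ℝ} (hx : x ∈ posOrth n) :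
    f.eval x = ∑ μ ∈ f.supp, f.coeff μ * Real.exp (dotCLM (fun i => Real.log (x i)) μ) := by
  simp only [eval, mono_eq_exp_dot_log hx, dotCLM_apply]

end Signomial

open Signomial in
/-- If every negative exponent vector of `f` lies in the interior of the
Newton polytope `N(f)`, then the image of `S(f) = f⁻¹(ℝ_{<0})` under the coordinate-wise
logarithm map is bounded. -/
theorem log_image_bounded {n : ℕ} (f : Signomial n)
    (h : ∀ μ ∈ f.supp, f.coeff μ < 0 → μ ∈ interior f.newton) :
    Bornology.IsBounded ((fun x : Fin n → ℝ => fun i => Real.log (x i)) '' negSet₁ f) := by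
  have hbounded := isBounded_setOf_sum_mul_exp_neg f.supp f.coeff fun μ hμ hc =>
    h μ hμ (hc.lt_of_ne (f.coeff_ne_zero μ hμ))
  obtain ⟨R, hR⟩ := isBounded_iff_forall_norm_le.1 hbounded
  refine isBounded_iff_forall_norm_le.2 ⟨R, ?_⟩
  rintro _ ⟨x, ⟨hx, hneg⟩, rfl⟩
  rw [f.eval_eq_sum_mul_exp hx] at hneg
  exact (norm_le_norm_dotCLM _).trans (hR _ hneg)
end
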